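/- For a nonzero matrix A, the function v ↦ 1/γ(v) − 1/v, where γ(v) = (1/N)·tr[(s·AᴴA + v⁻¹·I)⁻¹], is strictly positive and nonincreasing in v on (0,∞). -/

import Mathlib

open Matrix

/-- The LMMSE transfer function γ(v) = (1/N)·tr[(s·AᴴA + v⁻¹·I)⁻¹]. -/
noncomputable def lmmseGamma' {M N : ℕ} (A : Matrix (Fin M) (Fin N) ℂ) (s : ℝ) (v : ℝ) : ℝ :=
  (((((s : ℂ) • (Aᴴ * A) + ((v⁻¹ : ℝ) : ℂ) • (1 : Matrix (Fin N) (Fin N) ℂ))⁻¹).trace).re) / N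

/-!
In the variable `x = v⁻¹`, `γ` is the mean of the numbers `(a i + x)⁻¹`, where `a i ≥ 0` are the
eigenvalues of `s • (Aᴴ * A)`, so `1 / γ - x` is the excess over `x` of the harmonic mean of the
`a i + x`. These are all at least `x`, one of them strictly, so their mean exceeds `x`. For
monotonicity, averaging
`(a i + x)⁻¹ - (a i + y)⁻¹ = (y - x) * ((a i + x)⁻¹ * (a i + y)⁻¹)` and applying Chebyshev's sum
inequality to the right-hand side gives `γ x - γ y ≥ (y - x) * (γ x * γ y)` for `x ≤ y`, with `γ`
as a function of `v⁻¹`; divide by `γ x * γ y`.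
-/

open scoped BigOperators

section HarmonicMean

variable {ι K : Type*} [Fintype ι] [Field K] [LinearOrder K] [IsStrictOrderedRing K]

theorem expect_mul_expect_le_expect_mul_of_monovary {f g : ι → K} (hfg : Monovary f g) :
    (𝔼 i, f i) * 𝔼 i, g i ≤ 𝔼 i, f i * g i := by
  cases isEmpty_or_nonempty ι
  · simp
  have hcard : (0 : K) < Fintype.card ι := by exact_mod_cast Fintype.card_pos
  simp only [Fintype.expect_eq_sum_div_card]
  rw [div_mul_div_comm, div_le_div_iff₀ (by positivity) hcard]
  linear_combination (Fintype.card ι : K) * hfg.sum_mul_sum_le_card_mul_sum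

theorem lt_inv_expect_inv {b : ι → K} {x : K} (hx : 0 < x) (hle : ∀ i, x ≤ b i)
    (hlt : ∃ i, x < b i) : x < (𝔼 i, (b i)⁻¹)⁻¹ := by
  obtain ⟨k, hk⟩ := hlt
  have hpos : 0 < 𝔼 i, (b i)⁻¹ :=
    Finset.expect_pos (fun i _ => inv_pos.2 (hx.trans_le (hle i))) ⟨k, Finset.mem_univ k⟩
  rw [lt_inv_comm₀ hx hpos]
  exact Finset.expect_lt (fun i _ => inv_anti₀ hx (hle i))
    ⟨k, Finset.mem_univ k, inv_strictAnti₀ hx hk⟩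

theorem sub_mul_expect_inv_mul_expect_inv_le_sub {a : ι → K} {x y : K} (hx : ∀ i, 0 < a i + x)
    (hxy : x ≤ y) :
    (y - x) * ((𝔼 i, (a i + x)⁻¹) * 𝔼 i, (a i + y)⁻¹) ≤
      𝔼 i, (a i + x)⁻¹ - 𝔼 i, (a i + y)⁻¹ := by
  have hy (i : ι) : 0 < a i + y := (hx i).trans_le (by gcongr)
  have hmono : Monovary (fun i => (a i + x)⁻¹) fun i => (a i + y)⁻¹ := fun i j hij =>
    inv_anti₀ (hx j) <| by linarith [(inv_lt_inv₀ (hy i) (hy j)).1 hij]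
  calc (y - x) * ((𝔼 i, (a i + x)⁻¹) * 𝔼 i, (a i + y)⁻¹)
      ≤ (y - x) * 𝔼 i, (a i + x)⁻¹ * (a i + y)⁻¹ :=
        mul_le_mul_of_nonneg_left (expect_mul_expect_le_expect_mul_of_monovary hmono)
          (sub_nonneg.2 hxy)
    _ = 𝔼 i, ((a i + x)⁻¹ - (a i + y)⁻¹) := by
        rw [Finset.mul_expect]
        refine Finset.expect_congr rfl fun i _ => ?_
        rw [inv_sub_inv (hx i).ne' (hy i).ne', div_eq_mul_inv, mul_inv]
        ring
    _ = 𝔼 i, (a i + x)⁻¹ - 𝔼 i, (a i + y)⁻¹ := Finset.expect_sub_distrib _ _ _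

theorem inv_expect_inv_add_sub_le [Nonempty ι] {a : ι → K} {x y : K} (hx : ∀ i, 0 < a i + x)
    (hxy : x ≤ y) : (𝔼 i, (a i + x)⁻¹)⁻¹ - x ≤ (𝔼 i, (a i + y)⁻¹)⁻¹ - y := by
  have hpos {z : K} (hz : x ≤ z) : 0 < 𝔼 i, (a i + z)⁻¹ :=
    Finset.expect_pos (fun i _ => inv_pos.2 ((hx i).trans_le (by gcongr))) Finset.univ_nonempty
  suffices y - x ≤ (𝔼 i, (a i + y)⁻¹)⁻¹ - (𝔼 i, (a i + x)⁻¹)⁻¹ by linarith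
  rw [inv_sub_inv (hpos hxy).ne' (hpos le_rfl).ne',
    le_div_iff₀ (mul_pos (hpos hxy) (hpos le_rfl)), mul_comm (𝔼 i, (a i + y)⁻¹)]
  exact sub_mul_expect_inv_mul_expect_inv_le_sub hx hxy

end HarmonicMean

section Resolvent

open scoped ComplexOrder

variable {n 𝕜 : Type*} [RCLike 𝕜] [Fintype n] [DecidableEq n] {B : Matrix n n 𝕜}

theorem trace_cfc_eq_sum_eigenvalues (hB : B.IsHermitian) (f : ℝ → ℝ) :
    (cfc f B).trace = ∑ i, (f (hB.eigenvalues i) : 𝕜) := by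
  rw [hB.cfc_eq, IsHermitian.cfc, Unitary.conjStarAlgAut_apply, trace_mul_cycle,
    Unitary.coe_star_mul_self, one_mul, trace_diagonal]
  rfl

theorem inv_add_smul_one_eq_cfc (hB : B.IsHermitian) {x : ℝ}
    (hx : ∀ i, hB.eigenvalues i + x ≠ 0) :
    (B + x • (1 : Matrix n n 𝕜))⁻¹ = cfc (fun t => (t + x)⁻¹) B := by
  have hB' : IsSelfAdjoint B := hB
  have hspec : ∀ t ∈ spectrum ℝ B, t + x ≠ 0 := by
    rw [hB.spectrum_real_eq_range_eigenvalues]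
    exact Set.forall_mem_range.2 hx
  rw [cfc_inv (fun t => t + x) B hspec, cfc_add_const x (fun t => t) B, cfc_id' ℝ B,
    nonsing_inv_eq_ringInverse, Algebra.algebraMap_eq_smul_one]

/-- The normalized trace `(1 / n) * tr (B + x • 1)⁻¹` of the resolvent of `B` at `-x`, as a real
number: the trace is real when `B` is Hermitian. -/
noncomputable def normalizedResolventTrace (B : Matrix n n 𝕜) (x : ℝ) : ℝ :=
  RCLike.re (B + x • (1 : Matrix n n 𝕜))⁻¹.trace / Fintype.card n

theorem normalizedResolventTrace_eq_expect (hB : B.IsHermitian) {x : ℝ}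
    (hx : ∀ i, hB.eigenvalues i + x ≠ 0) :
    normalizedResolventTrace B x = 𝔼 i, (hB.eigenvalues i + x)⁻¹ := by
  rw [normalizedResolventTrace, inv_add_smul_one_eq_cfc hB hx, trace_cfc_eq_sum_eigenvalues hB,
    ← RCLike.ofReal_sum, RCLike.ofReal_re, Fintype.expect_eq_sum_div_card]

theorem lt_inv_normalizedResolventTrace (hB : B.PosSemidef) (hB₀ : B ≠ 0) {x : ℝ} (hx : 0 < x) :
    x < (normalizedResolventTrace B x)⁻¹ := by
  obtain ⟨k, hk⟩ : ∃ i, hB.1.eigenvalues i ≠ 0 :=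
    Function.ne_iff.1 (mt hB.1.eigenvalues_eq_zero_iff.1 hB₀)
  rw [normalizedResolventTrace_eq_expect hB.1
    fun i => (add_pos_of_nonneg_of_pos (hB.eigenvalues_nonneg i) hx).ne']
  exact lt_inv_expect_inv hx (fun i => le_add_of_nonneg_left (hB.eigenvalues_nonneg i))
    ⟨k, lt_add_of_pos_left x ((hB.eigenvalues_nonneg k).lt_of_ne' hk)⟩

theorem monotoneOn_inv_normalizedResolventTrace_sub [Nonempty n] (hB : B.PosSemidef) :
    MonotoneOn (fun x => (normalizedResolventTrace B x)⁻¹ - x) (Set.Ioi 0) := by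
  intro x hx y hy hxy
  have hpos {z : ℝ} (hz : 0 < z) (i : n) : 0 < hB.1.eigenvalues i + z :=
    add_pos_of_nonneg_of_pos (hB.eigenvalues_nonneg i) hz
  simp only [normalizedResolventTrace_eq_expect hB.1 fun i => (hpos hx i).ne',
    normalizedResolventTrace_eq_expect hB.1 fun i => (hpos hy i).ne']
  exact inv_expect_inv_add_sub_le (hpos hx) hxy

theorem stmt_6_general (hB : B.PosSemidef) (hB₀ : B ≠ 0) :
    (∀ v : ℝ, 0 < v → 0 < 1 / normalizedResolventTrace B v⁻¹ - 1 / v) ∧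
    (∀ v₁ v₂ : ℝ, 0 < v₁ → v₁ ≤ v₂ →
      1 / normalizedResolventTrace B v₂⁻¹ - 1 / v₂ ≤
        1 / normalizedResolventTrace B v₁⁻¹ - 1 / v₁) := by
  have : Nonempty n := not_isEmpty_iff.1 fun _ => hB₀ (Subsingleton.elim _ _)
  simp only [one_div]
  exact ⟨fun v hv => sub_pos.2 (lt_inv_normalizedResolventTrace hB hB₀ (inv_pos.2 hv)),
    fun v₁ v₂ hv₁ hv => monotoneOn_inv_normalizedResolventTrace_sub hB
      (inv_pos.2 (hv₁.trans_le hv)) (inv_pos.2 hv₁) (inv_anti₀ hv₁ hv)⟩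

end Resolvent

theorem lmmseGamma'_eq_normalizedResolventTrace {M N : ℕ} (A : Matrix (Fin M) (Fin N) ℂ)
    (s v : ℝ) : lmmseGamma' A s v = normalizedResolventTrace (s • (Aᴴ * A)) v⁻¹ := by
  simp only [lmmseGamma', normalizedResolventTrace, Complex.coe_smul, Fintype.card_fin,
    RCLike.re_to_complex]

theorem stmt_6 {M N : ℕ} (hN : 0 < N) (A : Matrix (Fin M) (Fin N) ℂ)
    (hA : A ≠ 0) (s : ℝ) (hs : 0 < s) :
    (∀ v : ℝ, 0 < v → 0 < 1 / lmmseGamma' A s v - 1 / v) ∧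
    (∀ v₁ v₂ : ℝ, 0 < v₁ → v₁ ≤ v₂ →
      1 / lmmseGamma' A s v₂ - 1 / v₂ ≤ 1 / lmmseGamma' A s v₁ - 1 / v₁) := by
  simp only [lmmseGamma'_eq_normalizedResolventTrace]
  open scoped ComplexOrder in
  exact stmt_6_general ((posSemidef_conjTranspose_mul_self A).smul hs.le)
    (smul_ne_zero hs.ne' (mt conjTranspose_mul_self_eq_zero.1 hA))
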